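/- Independence of random binning: Let P_{XY} be a joint probability mass function on finite alphabets 𝒳×𝒴 and let R_b < H(Y|X), where H(Y|X) = −Σ_{x,y} P_{XY}(x,y) log₂ P_{Y|X}(y|x). For each n, assign to each y^n ∈ 𝒴^n a bin index B(y^n) ∈ {1,…,2^{nR_b}} independently and uniformly at random, and define the (binning-dependent) joint distribution P_{X^n Y^n B}(x^n, y^n, b) = ( ∏_{t=1}^n P_{XY}(x_t, y_t) ) · 𝟙{B(y^n) = b}. Then E_ℬ[ ‖ P_{X^n B} − P_{X^n} × P^U_B ‖_TV ] → 0 as n → ∞, where P_{X^n} = ∏_{t=1}^n P_X, P^U_B is the uniform distribution on {1,…,2^{nR_b}}, and E_ℬ denotes expectation over the random bin assignment. -/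

import Mathlib

/-!
The argument is a one-shot second-moment bound followed by a Chernoff bound.

Write `w(x,y) = ∏ p(x_t,y_t)`, `q(x) = ∑_y w(x,y)`, and let `M` be the number of bins. The quantity
`P(x,b) - q(x)/M` equals `∑_y w(x,y) Z_y`, where the `Z_y = 𝟙{B(y) = b} - 1/M` are centred,
pairwise uncorrelated under a uniform binning, and have variance `(M-1)/M²`
(`expect_mul`). Split the pairs `(x,y)` into typical ones, where `w(x,y) ≤ K q(x)`, and the
others. On the typical part Jensen's inequality bounds the expected absolute value by
`√((M-1) ∑_y w(x,y)²)/M ≤ q(x) √((M-1)K)/M`; on the other part the triangle inequality gives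
`2/M` times the mass. Summing over `x` and `b` (`one_shot`), the expected total variation is at most
`√((M-1)K)` plus twice the atypical mass.

Choose `R_b < γ < H(Y|X)` and `K = 2^{-nγ}`. Since `M - 1 ≤ 2^{nR_b}`, the first term decays
exponentially; since it involves `M - 1` and not `M`, this
holds for `R_b ≤ 0` as well.
With `ℓ = ln(P_{Y|X}) + γ ln 2`, the atypical set is `∑ ℓ(x_t,y_t) > 0`, of mass at most `φ(s)^n`,
where `φ(s) = ∑ p e^{sℓ}`. As `φ(0) = 1` and `φ'(0) = (γ - H(Y|X)) ln 2 < 0`, some `s > 0` has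
`φ(s) < 1` (`exists_chernoff`).
-/

open Filter

/-- Total variation distance between two (discrete) distributions given by mass
functions, as a supremum over events: `sup_A |P(A) − Q(A)|`. -/
noncomputable def tvFin {α : Type*} [Fintype α] (f g : α → ℝ) : ℝ :=
  ⨆ A : Finset α, |(∑ x ∈ A, f x) - ∑ x ∈ A, g x|

/-! ### Total variation and the absolute difference -/

theorem tvFin_nonneg {α : Type*} [Fintype α] (f g : α → ℝ) : 0 ≤ tvFin f g :=
  Real.iSup_nonneg fun _ => abs_nonneg _

theorem tvFin_le_sum {α : Type*} [Fintype α] (f g : α → ℝ) :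
    tvFin f g ≤ ∑ a, |f a - g a| := by
  unfold tvFin
  refine ciSup_le fun A => ?_
  rw [← Finset.sum_sub_distrib]
  exact (Finset.abs_sum_le_sum_abs _ _).trans
    (Finset.sum_le_sum_of_subset_of_nonneg (Finset.subset_univ A) fun _ _ _ => abs_nonneg _)

/-! ### Centred bin indicators -/

/-- The centred indicator `𝟙{b' = b} - 1/M` of a bin. -/
noncomputable def binDev {M : ℕ} (b b' : Fin M) : ℝ := (if b' = b then 1 else 0) - (M : ℝ)⁻¹

theorem sum_binDev {M : ℕ} (hM : 0 < M) (b : Fin M) : ∑ b', binDev b b' = 0 := by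
  have : (M : ℝ) ≠ 0 := by positivity
  simp [binDev, Finset.sum_sub_distrib, this]

theorem sum_binDev_sq {M : ℕ} (hM : 0 < M) (b : Fin M) :
    ∑ b', (M : ℝ)⁻¹ * (binDev b b' * binDev b b') = ((M : ℝ) - 1) / (M : ℝ) ^ 2 := by
  have h0 : (M : ℝ) ≠ 0 := by positivity
  have h (b' : Fin M) : (M : ℝ)⁻¹ * (binDev b b' * binDev b b') =
      (M : ℝ)⁻¹ * ((if b' = b then 1 - 2 * (M : ℝ)⁻¹ else 0) + (M : ℝ)⁻¹ ^ 2) := by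
    unfold binDev
    split_ifs <;> ring
  simp only [h]
  rw [← Finset.mul_sum, Finset.sum_add_distrib]
  simp
  field_simp
  ring

theorem sum_abs_binDev_le {M : ℕ} (hM : 0 < M) (b : Fin M) :
    ∑ b', (M : ℝ)⁻¹ * |binDev b b'| ≤ 2 * (M : ℝ)⁻¹ := by
  have h0 : (M : ℝ) ≠ 0 := by positivity
  have h (b' : Fin M) : (M : ℝ)⁻¹ * |binDev b b'| ≤
      (M : ℝ)⁻¹ * ((if b' = b then 1 else 0) + (M : ℝ)⁻¹) := by
    refine mul_le_mul_of_nonneg_left ?_ (by positivity)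
    unfold binDev
    refine (abs_sub _ _).trans (le_of_eq ?_)
    rw [abs_of_nonneg (by positivity : (0 : ℝ) ≤ (M : ℝ)⁻¹)]
    split_ifs <;> simp
  refine (Finset.sum_le_sum fun b' _ => h b').trans (le_of_eq ?_)
  rw [← Finset.mul_sum, Finset.sum_add_distrib]
  simp [h0]
  ring

/-! ### Expectation over a random binning -/

section Binning

variable {ι : Type*} [Fintype ι] [DecidableEq ι] {M : ℕ}

/-- Expectation of `F` under a uniformly random binning of `ι` into `M` bins. -/
noncomputable def expect (F : (ι → Fin M) → ℝ) : ℝ :=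
  ∑ B : ι → Fin M, ((M : ℝ)⁻¹ ^ Fintype.card ι) * F B

theorem expect_mono {F G : (ι → Fin M) → ℝ} (h : ∀ B, F B ≤ G B) : expect F ≤ expect G :=
  Finset.sum_le_sum fun B _ => mul_le_mul_of_nonneg_left (h B) (by positivity)

theorem expect_sum {κ : Type*} (s : Finset κ) (F : κ → (ι → Fin M) → ℝ) :
    expect (fun B => ∑ k ∈ s, F k B) = ∑ k ∈ s, expect (F k) := by
  unfold expect
  simp only [Finset.mul_sum]
  exact Finset.sum_comm

theorem expect_const_mul (c : ℝ) (F : (ι → Fin M) → ℝ) :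
    expect (fun B => c * F B) = c * expect F := by
  unfold expect
  rw [Finset.mul_sum]
  exact Finset.sum_congr rfl fun _ _ => by ring

theorem expect_add (F G : (ι → Fin M) → ℝ) :
    expect (fun B => F B + G B) = expect F + expect G := by
  unfold expect
  simp only [mul_add, Finset.sum_add_distrib]

/-- Bins of distinct elements are independent. -/
theorem expect_prod (h : ι → Fin M → ℝ) :
    expect (fun B => ∏ i, h i (B i)) = ∏ i, ∑ b, (M : ℝ)⁻¹ * h i b := by
  unfold expect
  rw [Finset.prod_univ_sum, Fintype.piFinset_univ]
  refine Finset.sum_congr rfl fun B _ => ?_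
  rw [Finset.prod_mul_distrib]
  simp

theorem expect_apply (hM : 0 < M) (g : Fin M → ℝ) (y : ι) :
    expect (fun B => g (B y)) = ∑ b, (M : ℝ)⁻¹ * g b := by
  have h0 : (M : ℝ) ≠ 0 := by positivity
  have h := expect_prod (M := M) (fun i b => if i = y then g b else 1)
  simp only [Finset.prod_ite_eq', Finset.mem_univ, if_true] at h
  rw [h, Finset.prod_eq_single y]
  · simp
  · intro i _ hi
    simp [hi, h0]
  · simp

theorem expect_one (hM : 0 < M) : expect (fun _ : ι → Fin M => (1 : ℝ)) = 1 := by
  have h0 : (M : ℝ) ≠ 0 := by positivity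
  have h := expect_prod (ι := ι) (M := M) (fun _ _ => 1)
  simpa [h0] using h

/-- The centred bin indicators of distinct elements are uncorrelated. -/
theorem expect_mul (hM : 0 < M) (b : Fin M) (y y' : ι) :
    expect (fun B => binDev b (B y) * binDev b (B y')) =
      if y = y' then ((M : ℝ) - 1) / (M : ℝ) ^ 2 else 0 := by
  split_ifs with hy
  · subst hy
    rw [expect_apply hM (fun b' => binDev b b' * binDev b b') y, sum_binDev_sq hM]
  · have h := expect_prod (M := M)
      (fun i b' => (if i = y then binDev b b' else 1) * (if i = y' then binDev b b' else 1))
    simp only [Finset.prod_mul_distrib, Finset.prod_ite_eq', Finset.mem_univ, if_true] at h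
    rw [h]
    refine Finset.prod_eq_zero (Finset.mem_univ y) ?_
    simp [hy, ← Finset.mul_sum, sum_binDev hM]

theorem expect_sq (hM : 0 < M) (b : Fin M) (v : ι → ℝ) :
    expect (fun B => (∑ y, v y * binDev b (B y)) ^ 2) =
      ((M : ℝ) - 1) / (M : ℝ) ^ 2 * ∑ y, v y ^ 2 := by
  have h (B : ι → Fin M) : (∑ y, v y * binDev b (B y)) ^ 2 =
      ∑ y, ∑ y', (v y * v y') * (binDev b (B y) * binDev b (B y')) := by
    rw [sq, Finset.sum_mul_sum]
    exact Finset.sum_congr rfl fun _ _ => Finset.sum_congr rfl fun _ _ => by ring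
  simp only [h, expect_sum, expect_const_mul, expect_mul hM]
  rw [Finset.mul_sum]
  refine Finset.sum_congr rfl fun y _ => ?_
  simp
  ring

theorem expect_abs_le (hM : 0 < M) (F : (ι → Fin M) → ℝ) :
    expect (fun B => |F B|) ≤ √(expect (fun B => F B ^ 2)) := by
  refine Real.le_sqrt_of_sq_le ?_
  set m := expect (fun B => |F B|) with hm
  -- the variance of `|F|` is nonnegative
  have h0 : 0 ≤ expect (fun B => (|F B| - m) ^ 2) :=
    Finset.sum_nonneg fun B _ => by positivity
  have h1 (B : ι → Fin M) : (|F B| - m) ^ 2 = F B ^ 2 + ((-2 * m) * |F B| + m ^ 2 * 1) := by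
    rw [← sq_abs (F B)]; ring
  simp only [h1] at h0
  rw [expect_add, expect_add, expect_const_mul, expect_const_mul, expect_one hM, ← hm] at h0
  linarith

/-- Second-moment bound, for weights none of which exceeds `K Q` and of total mass at most `Q`. -/
theorem expect_abs_typical (hM : 0 < M) (b : Fin M) (v : ι → ℝ) (hv : ∀ y, 0 ≤ v y) (Q K : ℝ)
    (hQ : 0 ≤ Q) (hK : 0 ≤ K) (hvK : ∀ y, v y ≤ Q * K) (hvQ : ∑ y, v y ≤ Q) :
    expect (fun B => |∑ y, v y * binDev b (B y)|) ≤
      Q * (√(((M : ℝ) - 1) * K) * (M : ℝ)⁻¹) := by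
  refine (expect_abs_le hM _).trans ?_
  rw [expect_sq hM]
  have hM1 : (0 : ℝ) ≤ (M : ℝ) - 1 := by
    have : (1 : ℝ) ≤ M := by exact_mod_cast hM
    linarith
  have h1 : ∑ y, v y ^ 2 ≤ Q ^ 2 * K := by
    calc ∑ y, v y ^ 2 ≤ ∑ y, (Q * K) * v y :=
          Finset.sum_le_sum fun y _ => by
            rw [sq]; exact mul_le_mul_of_nonneg_right (hvK y) (hv y)
      _ = (Q * K) * ∑ y, v y := by rw [Finset.mul_sum]
      _ ≤ (Q * K) * Q := mul_le_mul_of_nonneg_left hvQ (by positivity)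
      _ = Q ^ 2 * K := by ring
  refine Real.sqrt_le_iff.2 ⟨by positivity, ?_⟩
  rw [mul_pow, mul_pow, Real.sq_sqrt (by positivity)]
  calc ((M : ℝ) - 1) / (M : ℝ) ^ 2 * ∑ y, v y ^ 2
      ≤ ((M : ℝ) - 1) / (M : ℝ) ^ 2 * (Q ^ 2 * K) :=
        mul_le_mul_of_nonneg_left h1 (by positivity)
    _ = Q ^ 2 * ((((M : ℝ) - 1) * K) * (M : ℝ)⁻¹ ^ 2) := by
        field_simp

theorem expect_abs_atypical (hM : 0 < M) (b : Fin M) (v : ι → ℝ) (hv : ∀ y, 0 ≤ v y) :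
    expect (fun B => |∑ y, v y * binDev b (B y)|) ≤ (∑ y, v y) * (2 * (M : ℝ)⁻¹) := by
  have h (B : ι → Fin M) : |∑ y, v y * binDev b (B y)| ≤ ∑ y, v y * |binDev b (B y)| := by
    refine (Finset.abs_sum_le_sum_abs _ _).trans (le_of_eq ?_)
    exact Finset.sum_congr rfl fun y _ => by rw [abs_mul, abs_of_nonneg (hv y)]
  refine (expect_mono h).trans ?_
  simp only [expect_sum, expect_const_mul]
  rw [Finset.sum_mul]
  refine Finset.sum_le_sum fun y _ => mul_le_mul_of_nonneg_left ?_ (hv y)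
  rw [expect_apply hM (fun b' => |binDev b b'|)]
  exact sum_abs_binDev_le hM b

open Classical in
/-- One-shot random binning bound, for an arbitrary set `G` of pairs on which `w(x,y) ≤ K q(x)`. -/
theorem one_shot {α : Type*} [Fintype α] (hM : 0 < M) (w : α → ι → ℝ) (hw : ∀ x y, 0 ≤ w x y)
    (q : α → ℝ) (hq : ∀ x, q x = ∑ y, w x y) (hq1 : ∑ x, q x = 1)
    (G : α → ι → Prop) (K : ℝ) (hK : 0 ≤ K) (hG : ∀ x y, G x y → w x y ≤ q x * K) :
    expect (fun B : ι → Fin M => tvFin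
        (fun a : α × Fin M => ∑ y, w a.1 y * (if B y = a.2 then 1 else 0))
        (fun a : α × Fin M => q a.1 * (M : ℝ)⁻¹)) ≤
      √(((M : ℝ) - 1) * K) + 2 * ∑ x, ∑ y, if G x y then 0 else w x y := by
  have h0 : (M : ℝ) ≠ 0 := by positivity
  have hq0 (x : α) : 0 ≤ q x := by rw [hq]; exact Finset.sum_nonneg fun y _ => hw x y
  have hdiff (B : ι → Fin M) (a : α × Fin M) :
      |∑ y, w a.1 y * (if B y = a.2 then 1 else 0) - q a.1 * (M : ℝ)⁻¹| ≤
        |∑ y, (if G a.1 y then w a.1 y else 0) * binDev a.2 (B y)| +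
        |∑ y, (if G a.1 y then 0 else w a.1 y) * binDev a.2 (B y)| := by
    refine le_trans (le_of_eq ?_) (abs_add_le _ _)
    congr 1
    rw [hq, Finset.sum_mul, ← Finset.sum_sub_distrib, ← Finset.sum_add_distrib]
    refine Finset.sum_congr rfl fun y _ => ?_
    unfold binDev
    split_ifs <;> ring
  have hnn1 (x : α) (y : ι) : 0 ≤ if G x y then w x y else 0 := by
    split_ifs; exacts [hw x y, le_rfl]
  have hnn2 (x : α) (y : ι) : 0 ≤ if G x y then 0 else w x y := by
    split_ifs; exacts [le_rfl, hw x y]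
  refine (expect_mono fun B =>
    (tvFin_le_sum _ _).trans (Finset.sum_le_sum fun a _ => hdiff B a)).trans ?_
  rw [expect_sum]
  simp only [expect_add]
  have key (a : α × Fin M) :
      expect (fun B : ι → Fin M => |∑ y, (if G a.1 y then w a.1 y else 0) * binDev a.2 (B y)|) +
      expect (fun B : ι → Fin M => |∑ y, (if G a.1 y then 0 else w a.1 y) * binDev a.2 (B y)|) ≤
      q a.1 * (√(((M : ℝ) - 1) * K) * (M : ℝ)⁻¹) +
        (∑ y, if G a.1 y then 0 else w a.1 y) * (2 * (M : ℝ)⁻¹) := by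
    refine add_le_add (expect_abs_typical hM a.2 _ (hnn1 a.1) (q a.1) K (hq0 _) hK ?_ ?_)
      (expect_abs_atypical hM a.2 _ (hnn2 a.1))
    · intro y
      split_ifs with h
      exacts [hG _ _ h, mul_nonneg (hq0 _) hK]
    · rw [hq]
      refine Finset.sum_le_sum fun y _ => ?_
      split_ifs; exacts [le_rfl, hw _ y]
  refine (Finset.sum_le_sum fun a _ => key a).trans (le_of_eq ?_)
  rw [Fintype.sum_prod_type]
  simp only [Finset.sum_const, Finset.card_univ, Fintype.card_fin, nsmul_eq_mul]
  rw [← Finset.mul_sum, Finset.sum_add_distrib, ← Finset.sum_mul, ← Finset.sum_mul, hq1]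
  field_simp

end Binning

/-! ### Chernoff bound and the asymptotics -/

/-- If `E[ℓ] < 0` then `E[e^{sℓ}] < 1` for some `s > 0`, as `E[ℓ]` is the derivative at `s = 0`
of `E[e^{sℓ}]`. Only the total mass of `P` matters, not its sign. -/
theorem exists_chernoff {κ : Type*} [Fintype κ] (P l : κ → ℝ) (hP : ∑ k, P k = 1)
    (hl : ∑ k, P k * l k < 0) : ∃ s > 0, ∑ k, P k * Real.exp (s * l k) < 1 := by
  have hd : HasDerivAt (fun s : ℝ => ∑ k, P k * Real.exp (s * l k)) (∑ k, P k * l k) 0 := by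
    have := HasDerivAt.fun_sum (u := Finset.univ) (x := (0 : ℝ))
      (A := fun k (s : ℝ) => P k * Real.exp (s * l k)) (A' := fun k => P k * l k) fun k _ => by
        have h := (((hasDerivAt_id (0 : ℝ)).mul_const (l k)).exp).const_mul (P k)
        simpa using h
    exact this
  have hslope := (hasDerivAt_iff_tendsto_slope.1 hd).eventually_lt_const hl
  obtain ⟨s, hs, hs0⟩ := ((hslope.filter_mono (nhdsGT_le_nhdsNE 0)).and
    self_mem_nhdsWithin).exists
  have hs0 : 0 < s := hs0
  refine ⟨s, hs0, ?_⟩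
  rw [slope_def_field, sub_zero, div_neg_iff] at hs
  simp only [zero_mul, Real.exp_zero, mul_one, hP] at hs
  rcases hs with h | h <;> linarith

/-- Summing a product over pairs of sequences factorises. -/
theorem sum_sum_prod {X Y : Type*} [Fintype X] [Fintype Y] (n : ℕ) (f : X → Y → ℝ) :
    ∑ xs : Fin n → X, ∑ ys : Fin n → Y, ∏ t, f (xs t) (ys t) = (∑ x, ∑ y, f x y) ^ n := by
  classical
  have h (xs : Fin n → X) :
      ∑ ys : Fin n → Y, ∏ t, f (xs t) (ys t) = ∏ t, ∑ y, f (xs t) y := by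
    rw [Finset.prod_univ_sum, Fintype.piFinset_univ]
  simp only [h]
  rw [Fintype.sum_pow]

/-- Independence of random binning: if `R_b < H(Y|X)`, then the expected total
variation (over the uniform random binning `B` of `𝒴^n` into `⌈2^{nR_b}⌉` bins)
between the joint distribution of `(X^n, B(Y^n))` and the product of `∏ P_X` with
the uniform distribution on bins vanishes as `n → ∞`. -/
theorem stmt5 {X Y : Type} [Fintype X] [Fintype Y] [DecidableEq Y] [Nonempty X] [Nonempty Y]
    (p : X → Y → ℝ) (hp0 : ∀ x y, 0 ≤ p x y) (hp1 : ∑ x, ∑ y, p x y = 1)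
    (Rb : ℝ)
    (hRb : Rb < -∑ x, ∑ y, p x y * Real.logb 2 (p x y / (∑ y', p x y'))) :
    Tendsto (fun n : ℕ =>
      ∑ B : (Fin n → Y) → Fin (Nat.ceil ((2:ℝ) ^ ((n:ℝ) * Rb))),
        (((Nat.ceil ((2:ℝ) ^ ((n:ℝ) * Rb)) : ℝ))⁻¹ ^ (Fintype.card (Fin n → Y))) *
        tvFin
          (fun q : (Fin n → X) × Fin (Nat.ceil ((2:ℝ) ^ ((n:ℝ) * Rb))) =>
            ∑ ys : Fin n → Y,
              (∏ t, p (q.1 t) (ys t)) * (if B ys = q.2 then 1 else 0))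
          (fun q : (Fin n → X) × Fin (Nat.ceil ((2:ℝ) ^ ((n:ℝ) * Rb))) =>
            (∏ t, ∑ y', p (q.1 t) y') *
              ((Nat.ceil ((2:ℝ) ^ ((n:ℝ) * Rb)) : ℝ))⁻¹))
      atTop (nhds 0) := by
  classical
  obtain ⟨γ, hγ1, hγ2⟩ := exists_between hRb
  have hlog2 : 0 < Real.log 2 := Real.log_pos one_lt_two
  set c : ℝ := (2 : ℝ) ^ (-γ) with hc
  have hc0 : 0 < c := by positivity
  set l : X → Y → ℝ := fun x y => Real.log (p x y / ∑ y', p x y') + γ * Real.log 2 with hl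
  have hpX (x : X) : 0 ≤ ∑ y', p x y' := Finset.sum_nonneg fun y _ => hp0 x y
  have hmean : ∑ k : X × Y, p k.1 k.2 * l k.1 k.2 < 0 := by
    have h : ∑ k : X × Y, p k.1 k.2 * l k.1 k.2 = Real.log 2 *
        ((∑ x, ∑ y, p x y * Real.logb 2 (p x y / (∑ y', p x y'))) + γ * ∑ x, ∑ y, p x y) := by
      rw [Fintype.sum_prod_type, Finset.mul_sum, ← Finset.sum_add_distrib, Finset.mul_sum]
      refine Finset.sum_congr rfl fun x _ => ?_
      rw [Finset.mul_sum, ← Finset.sum_add_distrib, Finset.mul_sum]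
      refine Finset.sum_congr rfl fun y _ => ?_
      simp only [hl, Real.logb]
      field_simp
    rw [h, hp1]
    exact mul_neg_of_pos_of_neg hlog2 (by linarith)
  obtain ⟨s, hs, hφ⟩ := exists_chernoff (fun k : X × Y => p k.1 k.2) (fun k => l k.1 k.2)
    (by rw [Fintype.sum_prod_type]; exact hp1) hmean
  rw [Fintype.sum_prod_type] at hφ
  set φ : ℝ := ∑ x, ∑ y, p x y * Real.exp (s * l x y) with hφdef
  have hφ0 : 0 ≤ φ := Finset.sum_nonneg fun x _ => Finset.sum_nonneg fun y _ =>
    mul_nonneg (hp0 x y) (Real.exp_pos _).le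
  -- equality when `p x y > 0`; the junk value of the logarithm at `0` is harmless
  have hple (x : X) (y : Y) : p x y ≤ (∑ y', p x y') * (Real.exp (l x y) * c) := by
    rcases (hp0 x y).eq_or_lt with h | h
    · rw [← h]; exact mul_nonneg (hpX x) (by positivity)
    · have hX : 0 < ∑ y', p x y' :=
        h.trans_le (Finset.single_le_sum (fun y _ => hp0 x y) (Finset.mem_univ y))
      refine le_of_eq ?_
      simp only [hl, hc]
      rw [Real.exp_add, Real.exp_log (div_pos h hX), Real.rpow_def_of_pos two_pos, mul_assoc,
        ← Real.exp_add]
      have : γ * Real.log 2 + Real.log 2 * -γ = 0 := by ring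
      rw [this, Real.exp_zero]
      field_simp
  have hbound (n : ℕ) : (∑ B : (Fin n → Y) → Fin (Nat.ceil ((2:ℝ) ^ ((n:ℝ) * Rb))),
        (((Nat.ceil ((2:ℝ) ^ ((n:ℝ) * Rb)) : ℝ))⁻¹ ^ (Fintype.card (Fin n → Y))) *
        tvFin
          (fun q : (Fin n → X) × Fin (Nat.ceil ((2:ℝ) ^ ((n:ℝ) * Rb))) =>
            ∑ ys : Fin n → Y,
              (∏ t, p (q.1 t) (ys t)) * (if B ys = q.2 then 1 else 0))
          (fun q : (Fin n → X) × Fin (Nat.ceil ((2:ℝ) ^ ((n:ℝ) * Rb))) =>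
            (∏ t, ∑ y', p (q.1 t) y') *
              ((Nat.ceil ((2:ℝ) ^ ((n:ℝ) * Rb)) : ℝ))⁻¹)) ≤
      √(((2 : ℝ) ^ (Rb - γ)) ^ n) + 2 * φ ^ n := by
    have hpos : (0 : ℝ) < (2:ℝ) ^ ((n:ℝ) * Rb) := by positivity
    have hceil := Nat.ceil_lt_add_one hpos.le
    have hM : 0 < Nat.ceil ((2:ℝ) ^ ((n:ℝ) * Rb)) := Nat.ceil_pos.2 hpos
    have hpow : (2:ℝ) ^ ((n:ℝ) * Rb) * c ^ n = ((2 : ℝ) ^ (Rb - γ)) ^ n := by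
      rw [mul_comm (n : ℝ), Real.rpow_mul two_pos.le, Real.rpow_natCast, ← mul_pow, hc,
        ← Real.rpow_add two_pos, sub_eq_add_neg]
    generalize Nat.ceil ((2:ℝ) ^ ((n:ℝ) * Rb)) = M at hceil hM ⊢
    have hw (xs : Fin n → X) (ys : Fin n → Y) : 0 ≤ ∏ t, p (xs t) (ys t) :=
      Finset.prod_nonneg fun t _ => hp0 _ _
    have hq (xs : Fin n → X) :
        ∏ t, ∑ y', p (xs t) y' = ∑ ys : Fin n → Y, ∏ t, p (xs t) (ys t) := by
      rw [Finset.prod_univ_sum, Fintype.piFinset_univ]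
    have h1 := one_shot hM (fun (xs : Fin n → X) (ys : Fin n → Y) => ∏ t, p (xs t) (ys t)) hw
      (fun xs => ∏ t, ∑ y', p (xs t) y') hq
      (by simp only [hq]; rw [sum_sum_prod, hp1, one_pow])
      (fun xs ys => ∑ t, l (xs t) (ys t) ≤ 0) (c ^ n) (by positivity) (by
        intro xs ys hG
        calc ∏ t, p (xs t) (ys t)
            ≤ ∏ t, ((∑ y', p (xs t) y') * (Real.exp (l (xs t) (ys t)) * c)) :=
              Finset.prod_le_prod (fun t _ => hp0 _ _) fun t _ => hple _ _
          _ = (∏ t, ∑ y', p (xs t) y') * (Real.exp (∑ t, l (xs t) (ys t)) * c ^ n) := by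
              rw [Finset.prod_mul_distrib, Finset.prod_mul_distrib, Real.exp_sum]
              simp
          _ ≤ (∏ t, ∑ y', p (xs t) y') * (1 * c ^ n) := by
              refine mul_le_mul_of_nonneg_left ?_ (Finset.prod_nonneg fun t _ => hpX _)
              exact mul_le_mul_of_nonneg_right (Real.exp_le_one_iff.2 hG) (by positivity)
          _ = _ := by rw [one_mul])
    refine le_trans h1 (add_le_add (Real.sqrt_le_sqrt ?_) (mul_le_mul_of_nonneg_left ?_ two_pos.le))
    · rw [← hpow]
      exact mul_le_mul_of_nonneg_right (by linarith) (by positivity)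
    · rw [hφdef, ← sum_sum_prod]
      refine Finset.sum_le_sum fun xs _ => Finset.sum_le_sum fun ys _ => ?_
      rw [Finset.prod_mul_distrib, ← Real.exp_sum, ← Finset.mul_sum]
      split_ifs with hG
      · exact mul_nonneg (hw xs ys) (Real.exp_pos _).le
      · exact le_mul_of_one_le_right (hw xs ys)
          (Real.one_le_exp (mul_nonneg hs.le (not_le.1 hG).le))
  have hlim : Tendsto (fun n : ℕ => √(((2 : ℝ) ^ (Rb - γ)) ^ n) + 2 * φ ^ n) atTop (nhds 0) := by
    have ha : (2 : ℝ) ^ (Rb - γ) < 1 :=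
      Real.rpow_lt_one_of_one_lt_of_neg one_lt_two (by linarith)
    have h1 := (tendsto_pow_atTop_nhds_zero_of_lt_one
      (by positivity : (0 : ℝ) ≤ (2 : ℝ) ^ (Rb - γ)) ha).sqrt
    have h2 := (tendsto_pow_atTop_nhds_zero_of_lt_one hφ0 hφ).const_mul 2
    simpa using h1.add h2
  refine squeeze_zero (fun n => ?_) hbound hlim
  exact Finset.sum_nonneg fun B _ => mul_nonneg (by positivity) (tvFin_nonneg _ _)
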